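/- (Error bound of value iteration with the Boltzmann softmax operator, first part) Given a finite Markov decision process, let V* satisfy T_m V* = V*, fix β > 0, let V₀ : S → ℝ be arbitrary, and define V_{t+1} = T_β V_t. Then limsup_{t→∞} ‖V_t − V*‖∞ ≤ log(|A|)/(β·(1−γ)). -/

import Mathlib

/-!
The Boltzmann average of `x` is the mean of `x` under the Gibbs weights `exp (β * x i)`. Jensen's
inequality for `exp` at the points `-(β * x i)` makes these weights cancel and bounds their sum by
`|A| * exp (β * boltz β x)`. This sum dominates `exp (β * max x)`, so `boltz β x` misses the maximum
by at most `log |A| / β`. As `Tm` is a `γ`-contraction in the sup norm, the errors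
`d t = ‖V t - V*‖` satisfy `d (t + 1) ≤ γ * d t + log |A| / β`. Geometric decay of the distance of
`d` to the fixed point `log |A| / (β * (1 - γ))` of this affine recursion gives the bound.
-/

noncomputable def boltz {ι : Type*} [Fintype ι] (β : ℝ) (x : ι → ℝ) : ℝ :=
  (∑ i, Real.exp (β * x i) * x i) / ∑ i, Real.exp (β * x i)

noncomputable def fmax {ι : Type*} [Fintype ι] [Nonempty ι] (x : ι → ℝ) : ℝ :=
  Finset.univ.sup' Finset.univ_nonempty x

noncomputable def fmin {ι : Type*} [Fintype ι] [Nonempty ι] (x : ι → ℝ) : ℝ :=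
  Finset.univ.inf' Finset.univ_nonempty x

noncomputable def Qval {S A : Type*} [Fintype S] (p : S → A → S → ℝ) (r : S → A → ℝ)
    (γ : ℝ) (V : S → ℝ) (s : S) (a : A) : ℝ :=
  r s a + γ * ∑ s', p s a s' * V s'

noncomputable def Tm {S A : Type*} [Fintype S] [Fintype A] [Nonempty A]
    (p : S → A → S → ℝ) (r : S → A → ℝ) (γ : ℝ) (V : S → ℝ) (s : S) : ℝ :=
  fmax (Qval p r γ V s)

noncomputable def Tb {S A : Type*} [Fintype S] [Fintype A]
    (p : S → A → S → ℝ) (r : S → A → ℝ) (γ : ℝ) (β : ℝ) (V : S → ℝ) (s : S) : ℝ :=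
  boltz β (Qval p r γ V s)

noncomputable def supNorm {S : Type*} [Fintype S] [Nonempty S] (V : S → ℝ) : ℝ :=
  fmax (fun s => |V s|)

open Filter

section FiniteMax

variable {ι : Type*} [Fintype ι] [Nonempty ι]

lemma le_fmax (x : ι → ℝ) (i : ι) : x i ≤ fmax x :=
  Finset.le_sup' x (Finset.mem_univ i)

lemma fmax_le {x : ι → ℝ} {c : ℝ} (h : ∀ i, x i ≤ c) : fmax x ≤ c :=
  Finset.sup'_le _ _ fun i _ => h i

lemma fmax_le_fmax_add_norm_sub (x y : ι → ℝ) : fmax x ≤ fmax y + ‖x - y‖ :=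
  fmax_le fun i => calc
    x i = y i + (x - y) i := by simp
    _ ≤ fmax y + ‖x - y‖ :=
      add_le_add (le_fmax y i) ((le_abs_self _).trans (norm_le_pi_norm (x - y) i))

lemma abs_fmax_sub_fmax_le (x y : ι → ℝ) : |fmax x - fmax y| ≤ ‖x - y‖ :=
  abs_sub_le_iff.2 ⟨sub_le_iff_le_add'.2 (fmax_le_fmax_add_norm_sub x y),
    sub_le_iff_le_add'.2 (norm_sub_rev x y ▸ fmax_le_fmax_add_norm_sub y x)⟩

lemma supNorm_eq_norm (x : ι → ℝ) : supNorm x = ‖x‖ :=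
  le_antisymm (fmax_le (norm_le_pi_norm x))
    ((pi_norm_le_iff_of_nonempty x).2 (le_fmax fun i => |x i|))

end FiniteMax

section Boltzmann

variable {ι : Type*} [Fintype ι]

lemma boltz_eq_centerMass (β : ℝ) (x : ι → ℝ) :
    boltz β x = Finset.univ.centerMass (fun i => Real.exp (β * x i)) x := by
  simp only [boltz, Finset.centerMass, smul_eq_mul, div_eq_inv_mul]

variable [Nonempty ι]

lemma sum_exp_pos (x : ι → ℝ) : 0 < ∑ i, Real.exp (x i) :=
  Finset.sum_pos (fun i _ => Real.exp_pos (x i)) Finset.univ_nonempty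

lemma boltz_le_fmax (β : ℝ) (x : ι → ℝ) : boltz β x ≤ fmax x := by
  rw [boltz_eq_centerMass]
  exact Finset.centerMass_le_sup (fun i _ => (Real.exp_pos _).le) (sum_exp_pos _)

lemma sum_exp_le_card_mul_exp_boltz (β : ℝ) (x : ι → ℝ) :
    ∑ i, Real.exp (β * x i) ≤ Fintype.card ι * Real.exp (β * boltz β x) := by
  set w : ι → ℝ := fun i => Real.exp (β * x i)
  have w_sum_pos : 0 < ∑ i, w i := sum_exp_pos _
  have mean_exp : Finset.univ.centerMass w (fun i => Real.exp (-β * x i)) =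
      Fintype.card ι / ∑ i, w i := by
    simp [Finset.centerMass, w, ← Real.exp_add, div_eq_inv_mul]
  have jensen : Real.exp (-β * boltz β x) ≤ Fintype.card ι / ∑ i, w i := calc
    Real.exp (-β * boltz β x)
        = Real.exp (Finset.univ.centerMass w fun i => -β * x i) := by
          rw [boltz_eq_centerMass, ← smul_eq_mul, ← Finset.centerMass_smul]
          rfl
    _ ≤ Finset.univ.centerMass w (fun i => Real.exp (-β * x i)) :=
          convexOn_exp.map_centerMass_le (fun i _ => (Real.exp_pos _).le) w_sum_pos
            fun i _ => Set.mem_univ _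
    _ = Fintype.card ι / ∑ i, w i := mean_exp
  rwa [neg_mul, Real.exp_neg, inv_le_comm₀ (by positivity) (by positivity), inv_div,
    div_le_iff₀' (by positivity)] at jensen

lemma fmax_le_boltz_add_log_card_div {β : ℝ} (hβ : 0 < β) (x : ι → ℝ) :
    fmax x ≤ boltz β x + Real.log (Fintype.card ι) / β := by
  refine fmax_le fun i => ?_
  have card_pos : (0 : ℝ) < Fintype.card ι := Nat.cast_pos.2 Fintype.card_pos
  have exp_le : Real.exp (β * x i) ≤
      Real.exp (Real.log (Fintype.card ι) + β * boltz β x) := calc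
    Real.exp (β * x i) ≤ ∑ j, Real.exp (β * x j) :=
      Finset.single_le_sum (f := fun j => Real.exp (β * x j))
        (fun j _ => (Real.exp_pos _).le) (Finset.mem_univ i)
    _ ≤ Fintype.card ι * Real.exp (β * boltz β x) := sum_exp_le_card_mul_exp_boltz β x
    _ = Real.exp (Real.log (Fintype.card ι) + β * boltz β x) := by
      rw [Real.exp_add, Real.exp_log card_pos]
  calc
    x i ≤ (Real.log (Fintype.card ι) + β * boltz β x) / β :=
      (le_div_iff₀' hβ).2 (Real.exp_le_exp.1 exp_le)
    _ = boltz β x + Real.log (Fintype.card ι) / β := by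
      field_simp
      ring

lemma abs_boltz_sub_fmax_le {β : ℝ} (hβ : 0 < β) (x : ι → ℝ) :
    |boltz β x - fmax x| ≤ Real.log (Fintype.card ι) / β := by
  rw [abs_of_nonpos (sub_nonpos.2 (boltz_le_fmax β x)), neg_sub]
  exact sub_le_iff_le_add'.2 (fmax_le_boltz_add_log_card_div hβ x)

end Boltzmann

section BellmanOperators

variable {S A : Type*} [Fintype S] {p : S → A → S → ℝ} (r : S → A → ℝ) (γ : ℝ)

lemma abs_sum_mul_le_norm {w : S → ℝ} (hw : ∑ s, |w s| ≤ 1) (V : S → ℝ) :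
    |∑ s, w s * V s| ≤ ‖V‖ := calc
  |∑ s, w s * V s| ≤ ∑ s, |w s * V s| := Finset.abs_sum_le_sum_abs _ _
  _ ≤ ∑ s, |w s| * ‖V‖ := Finset.sum_le_sum fun s _ => by
    rw [abs_mul]
    exact mul_le_mul_of_nonneg_left (norm_le_pi_norm V s) (abs_nonneg _)
  _ = (∑ s, |w s|) * ‖V‖ := (Finset.sum_mul _ _ _).symm
  _ ≤ ‖V‖ := mul_le_of_le_one_left (norm_nonneg V) hw

lemma abs_qval_sub_qval_le {s : S} {a : A} (hp : ∑ s', |p s a s'| ≤ 1) (V W : S → ℝ) :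
    |Qval p r γ V s a - Qval p r γ W s a| ≤ |γ| * ‖V - W‖ := by
  have qval_sub : Qval p r γ V s a - Qval p r γ W s a = γ * ∑ s', p s a s' * (V - W) s' := by
    simp only [Qval, Pi.sub_apply, mul_sub, Finset.sum_sub_distrib]
    ring
  rw [qval_sub, abs_mul]
  exact mul_le_mul_of_nonneg_left (abs_sum_mul_le_norm hp (V - W)) (abs_nonneg γ)

variable [Fintype A] [Nonempty A]

lemma norm_tm_sub_tm_le (hp : ∀ s a, ∑ s', |p s a s'| ≤ 1) (V W : S → ℝ) :
    ‖Tm p r γ V - Tm p r γ W‖ ≤ |γ| * ‖V - W‖ := by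
  refine (pi_norm_le_iff_of_nonneg (by positivity)).2 fun s => ?_
  refine (abs_fmax_sub_fmax_le _ _).trans ?_
  exact (pi_norm_le_iff_of_nonempty _).2 fun a => abs_qval_sub_qval_le r γ (hp s a) V W

lemma norm_tb_sub_tm_le (p : S → A → S → ℝ) {β : ℝ} (hβ : 0 < β) (V : S → ℝ) :
    ‖Tb p r γ β V - Tm p r γ V‖ ≤ Real.log (Fintype.card A) / β :=
  (pi_norm_le_iff_of_nonneg (div_nonneg (Real.log_natCast_nonneg _) hβ.le)).2 fun _ =>
    abs_boltz_sub_fmax_le hβ _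

lemma norm_tb_sub_le_of_tm_eq (hp : ∀ s a, ∑ s', |p s a s'| ≤ 1) {β : ℝ} (hβ : 0 < β)
    (V : S → ℝ) {Vstar : S → ℝ} (hVstar : Tm p r γ Vstar = Vstar) :
    ‖Tb p r γ β V - Vstar‖ ≤ |γ| * ‖V - Vstar‖ + Real.log (Fintype.card A) / β := calc
  ‖Tb p r γ β V - Vstar‖
      ≤ ‖Tb p r γ β V - Tm p r γ V‖ + ‖Tm p r γ V - Vstar‖ :=
        norm_sub_le_norm_sub_add_norm_sub _ _ _
  _ = ‖Tb p r γ β V - Tm p r γ V‖ + ‖Tm p r γ V - Tm p r γ Vstar‖ := by rw [hVstar]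
  _ ≤ Real.log (Fintype.card A) / β + |γ| * ‖V - Vstar‖ :=
    add_le_add (norm_tb_sub_tm_le r γ p hβ V) (norm_tm_sub_tm_le r γ hp V Vstar)
  _ = |γ| * ‖V - Vstar‖ + Real.log (Fintype.card A) / β := add_comm _ _

end BellmanOperators

section AffineRecursion

variable {u : ℕ → ℝ} {c b : ℝ}

lemma sub_div_le_pow_mul_of_le_mul_add (hc0 : 0 ≤ c) (hc1 : c ≠ 1)
    (hu : ∀ n, u (n + 1) ≤ c * u n + b) (n : ℕ) :
    u n - b / (1 - c) ≤ c ^ n * (u 0 - b / (1 - c)) := by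
  have fixed_point : c * (b / (1 - c)) + b = b / (1 - c) := by
    have : 1 - c ≠ 0 := sub_ne_zero.2 hc1.symm
    field_simp
    ring
  refine le_geom (u := fun n => u n - b / (1 - c)) hc0 n fun k _ => ?_
  linarith [hu k]

lemma limsup_le_div_of_le_mul_add (hc0 : 0 ≤ c) (hc1 : c < 1)
    (hu_cobdd : IsCoboundedUnder (· ≤ ·) atTop u) (hu : ∀ n, u (n + 1) ≤ c * u n + b) :
    limsup u atTop ≤ b / (1 - c) := by
  have le_geometric (n : ℕ) : u n ≤ c ^ n * (u 0 - b / (1 - c)) + b / (1 - c) :=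
    sub_le_iff_le_add.1 (sub_div_le_pow_mul_of_le_mul_add hc0 hc1.ne hu n)
  have geometric_tendsto : Tendsto (fun n => c ^ n * (u 0 - b / (1 - c)) + b / (1 - c)) atTop
      (nhds (b / (1 - c))) := by
    simpa only [zero_mul, zero_add] using
      ((tendsto_pow_atTop_nhds_zero_of_lt_one hc0 hc1).mul_const _).add_const (b / (1 - c))
  rw [← geometric_tendsto.limsup_eq]
  exact limsup_le_limsup (.of_forall le_geometric) hu_cobdd geometric_tendsto.isBoundedUnder_le

end AffineRecursion

theorem fixed_boltz_vi_error_bound_log_general {S A : Type*} [Fintype S] [Fintype A] [Nonempty S]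
    [Nonempty A] (p : S → A → S → ℝ) (hp : ∀ s a, ∑ s', |p s a s'| ≤ 1)
    (r : S → A → ℝ) (γ : ℝ) (hγ : |γ| < 1)
    (Vstar : S → ℝ) (hVstar : Tm p r γ Vstar = Vstar) (β : ℝ) (hβ : 0 < β)
    (Vseq : ℕ → S → ℝ) (hVsucc : ∀ t, Vseq (t + 1) = Tb p r γ β (Vseq t)) :
    limsup (fun t => supNorm (fun s => Vseq t s - Vstar s)) atTop
      ≤ Real.log (Fintype.card A) / (β * (1 - |γ|)) := by
  have error_step (t : ℕ) : ‖Vseq (t + 1) - Vstar‖ ≤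
      |γ| * ‖Vseq t - Vstar‖ + Real.log (Fintype.card A) / β := by
    rw [hVsucc]
    exact norm_tb_sub_le_of_tm_eq r γ hp hβ (Vseq t) hVstar
  simp only [supNorm_eq_norm]
  rw [← div_div]
  exact limsup_le_div_of_le_mul_add (abs_nonneg γ) hγ
    (isCoboundedUnder_le_of_le atTop fun t => norm_nonneg (Vseq t - Vstar)) error_step

theorem fixed_boltz_vi_error_bound_log {S A : Type*} [Fintype S] [Fintype A] [Nonempty S] [Nonempty A]
    (p : S → A → S → ℝ) (hp0 : ∀ s a s', 0 ≤ p s a s') (hp1 : ∀ s a, ∑ s', p s a s' = 1)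
    (r : S → A → ℝ) (γ : ℝ) (hγ0 : 0 ≤ γ) (hγ1 : γ < 1)
    (Vstar : S → ℝ) (hVstar : Tm p r γ Vstar = Vstar)
    (β : ℝ) (hβ : 0 < β)
    (V₀ : S → ℝ) (Vseq : ℕ → S → ℝ)
    (hV0 : Vseq 0 = V₀)
    (hVsucc : ∀ t, Vseq (t + 1) = Tb p r γ β (Vseq t)) :
    Filter.limsup (fun t => supNorm (fun s => Vseq t s - Vstar s)) atTop
      ≤ Real.log (Fintype.card A) / (β * (1 - γ)) := by
  have hp s a : ∑ s', |p s a s'| ≤ 1 := by simp only [abs_of_nonneg (hp0 s a _), hp1, le_refl]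
  simpa only [abs_of_nonneg hγ0] using fixed_boltz_vi_error_bound_log_general p hp r γ
    (by rwa [abs_of_nonneg hγ0]) Vstar hVstar β hβ Vseq hVsucc
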